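/- arXiv:2507.01345 — 6 statements merged into one kernel-verified Lean document; each statement's English description precedes it below -/
import Mathlib

section
/- Let I₁, I₂ ⊆ ℝ be open intervals with base points s₁ ∈ I₁ and s₂ ∈ I₂, and let γ : I₁ → ℂ and ξ : I₂ → ℂ be continuously differentiable curves such that γ'(x) ≠ 0 for all x ∈ I₁, ξ'(y) ≠ 0 for all y ∈ I₂, and ξ(y) ≠ 0 for all y ∈ I₂. Then the map F̌ is a Lagrangian immersion into ℂ²: for every (x,y) ∈ I₁ × I₂ one has ∂F̌/∂x(x,y) = γ'(x)·(ξ(y), −conj(γ(x))) and ∂F̌/∂y(x,y) = ξ'(y)·(γ(x), conj(ξ(y))), these two vectors of ℂ² are linearly independent over ℝ, and ω₀(∂F̌/∂x(x,y), ∂F̌/∂y(x,y)) = 0. -/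
open Complex

/-- The primitive `β_γ` of the pullback of the Liouville form by a curve `γ`
(with given derivative `γ'` and base point `s₀`). -/
noncomputable def beta (γ γ' : ℝ → ℂ) (s₀ s : ℝ) : ℝ :=
  ∫ t in s₀..s, ((starRingEnd ℂ) (γ t) * γ' t).im

/-- The Castro–Lerma profile surface `F̌ : I₁ × I₂ → ℂ²`. -/
noncomputable def Fcheck (γ ξ γ' ξ' : ℝ → ℂ) (s₁ s₂ : ℝ) (x y : ℝ) : ℂ × ℂ :=
  (γ x * ξ y,
    ((1/2 * (‖ξ y‖ ^ 2 - ‖γ x‖ ^ 2) : ℝ) : ℂ)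
      + Complex.I * ((beta ξ ξ' s₂ y - beta γ γ' s₁ x : ℝ) : ℂ))

/-- The standard symplectic form `ω₀` on `ℂ²`. -/
noncomputable def omega0 (v w : ℂ × ℂ) : ℝ :=
  ((starRingEnd ℂ) v.1 * w.1).im + ((starRingEnd ℂ) v.2 * w.2).im

/-- The complex primitive of `conj γ * γ'`. -/
lemma hasDerivAt_prim (J : Set ℝ) (hJo : IsOpen J) (hJc : J.OrdConnected) (s₀ : ℝ) (hs : s₀ ∈ J)
    (γ γ' : ℝ → ℂ) (hγ : ∀ x ∈ J, HasDerivAt γ (γ' x) x) (hc : ContinuousOn γ' J)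
    (x : ℝ) (hx : x ∈ J) :
    HasDerivAt (fun s => ((1/2 * ‖γ s‖ ^ 2 : ℝ) : ℂ) + Complex.I * ((beta γ γ' s₀ s : ℝ) : ℂ))
      (γ' x * (starRingEnd ℂ) (γ x)) x := by
  have hγc : ContinuousOn γ J := fun t ht => (hγ t ht).continuousAt.continuousWithinAt
  have hcont : ContinuousOn (fun t => ((starRingEnd ℂ) (γ t) * γ' t).im) J :=
    Complex.continuous_im.comp_continuousOn
      ((Complex.continuous_conj.comp_continuousOn hγc).mul hc)
  have hsub : Set.uIcc s₀ x ⊆ J := hJc.uIcc_subset hs hx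
  have hb : HasDerivAt (fun s => beta γ γ' s₀ s) (((starRingEnd ℂ) (γ x) * γ' x).im) x := by
    unfold beta
    exact intervalIntegral.integral_hasDerivAt_right
      ((hcont.mono hsub).intervalIntegrable)
      (hcont.stronglyMeasurableAtFilter hJo x hx)
      (hcont.continuousAt (hJo.mem_nhds hx))
  have hre : HasDerivAt (fun s => (γ s).re) (γ' x).re x :=
    (Complex.reCLM.hasFDerivAt.comp_hasDerivAt x (hγ x hx))
  have him : HasDerivAt (fun s => (γ s).im) (γ' x).im x :=
    (Complex.imCLM.hasFDerivAt.comp_hasDerivAt x (hγ x hx))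
  have hn : HasDerivAt (fun s => 1/2 * ‖γ s‖ ^ 2)
      ((γ x).re * (γ' x).re + (γ x).im * (γ' x).im) x := by
    have h := ((hre.mul hre).add (him.mul him)).const_mul (1/2 : ℝ)
    have hf : (fun s => 1/2 * ‖γ s‖ ^ 2) = fun s => (1/2 : ℝ) *
        (((fun s => (γ s).re) * fun s => (γ s).re) + (fun s => (γ s).im) * fun s => (γ s).im) s := by
      funext s
      simp [Complex.sq_norm, Complex.normSq_apply]
    rw [hf]
    exact h.congr_deriv (by ring)
  have h := hn.ofReal_comp.add (hb.ofReal_comp.const_mul Complex.I)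
  refine HasDerivAt.congr_deriv h ?_
  apply Complex.ext <;> simp <;> ring

/-- `F̌` is a Lagrangian immersion: the partial derivatives are
`γ'(x)·(ξ(y), −conj(γ(x)))` and `ξ'(y)·(γ(x), conj(ξ(y)))`, these are linearly
independent over `ℝ`, and `ω₀` vanishes on them. -/
theorem lagrangian_immersion_ansatz
    (I₁ I₂ : Set ℝ) (hI₁o : IsOpen I₁) (hI₂o : IsOpen I₂)
    (hI₁c : I₁.OrdConnected) (hI₂c : I₂.OrdConnected)
    (s₁ s₂ : ℝ) (hs₁ : s₁ ∈ I₁) (hs₂ : s₂ ∈ I₂)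
    (γ ξ γ' ξ' : ℝ → ℂ)
    (hγ : ∀ x ∈ I₁, HasDerivAt γ (γ' x) x)
    (hξ : ∀ y ∈ I₂, HasDerivAt ξ (ξ' y) y)
    (hγ'c : ContinuousOn γ' I₁) (hξ'c : ContinuousOn ξ' I₂)
    (hγ'0 : ∀ x ∈ I₁, γ' x ≠ 0) (hξ'0 : ∀ y ∈ I₂, ξ' y ≠ 0)
    (hξ0 : ∀ y ∈ I₂, ξ y ≠ 0)
    (x y : ℝ) (hx : x ∈ I₁) (hy : y ∈ I₂) :
    HasDerivAt (fun x' => Fcheck γ ξ γ' ξ' s₁ s₂ x' y)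
        (γ' x • ((ξ y, -((starRingEnd ℂ) (γ x))) : ℂ × ℂ)) x ∧
    HasDerivAt (fun y' => Fcheck γ ξ γ' ξ' s₁ s₂ x y')
        (ξ' y • ((γ x, (starRingEnd ℂ) (ξ y)) : ℂ × ℂ)) y ∧
    LinearIndependent ℝ
      ![γ' x • ((ξ y, -((starRingEnd ℂ) (γ x))) : ℂ × ℂ),
        ξ' y • ((γ x, (starRingEnd ℂ) (ξ y)) : ℂ × ℂ)] ∧
    omega0 (γ' x • ((ξ y, -((starRingEnd ℂ) (γ x))) : ℂ × ℂ))
        (ξ' y • ((γ x, (starRingEnd ℂ) (ξ y)) : ℂ × ℂ)) = 0 := by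
  have hA := hasDerivAt_prim I₁ hI₁o hI₁c s₁ hs₁ γ γ' hγ hγ'c x hx
  have hB := hasDerivAt_prim I₂ hI₂o hI₂c s₂ hs₂ ξ ξ' hξ hξ'c y hy
  have hγx := hγ'0 x hx
  have hξy := hξ'0 y hy
  have hξ0y := hξ0 y hy
  refine ⟨?_, ?_, ?_, ?_⟩
  · have h := ((hγ x hx).mul_const (ξ y)).prodMk (hA.const_sub
      (((1/2 * ‖ξ y‖ ^ 2 : ℝ) : ℂ) + Complex.I * ((beta ξ ξ' s₂ y : ℝ) : ℂ)))
    convert h using 1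
    · funext s
      simp only [Fcheck, Prod.mk.injEq, true_and]
      push_cast
      ring
    · simp
  · have h := ((hξ y hy).const_mul (γ x)).prodMk (hB.sub_const
      (((1/2 * ‖γ x‖ ^ 2 : ℝ) : ℂ) + Complex.I * ((beta γ γ' s₁ x : ℝ) : ℂ)))
    convert h using 1
    · funext s
      simp only [Fcheck, Prod.mk.injEq, true_and]
      push_cast
      ring
    · simp [mul_comm]
  · rw [LinearIndependent.pair_iff]
    intro a b hab
    have h1 := congrArg Prod.fst hab
    have h2 := congrArg Prod.snd hab
    simp only [Prod.fst_add, Prod.snd_add, Prod.smul_fst, Prod.smul_snd, Prod.fst_zero,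
      Prod.snd_zero, smul_eq_mul, Complex.real_smul] at h1 h2
    have h3 : (a : ℂ) * γ' x * ((Complex.normSq (ξ y) + Complex.normSq (γ x) : ℝ) : ℂ) = 0 := by
      push_cast
      rw [← Complex.mul_conj, ← Complex.mul_conj]
      linear_combination (starRingEnd ℂ) (ξ y) * h1 - γ x * h2
    have hpos : Complex.normSq (ξ y) + Complex.normSq (γ x) ≠ 0 :=
      (add_pos_of_pos_of_nonneg (Complex.normSq_pos.2 hξ0y) (Complex.normSq_nonneg _)).ne'
    have ha : a = 0 := by
      rcases mul_eq_zero.1 h3 with h | h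
      · rcases mul_eq_zero.1 h with h | h
        · exact_mod_cast h
        · exact absurd h hγx
      · exact absurd (by exact_mod_cast h) hpos
    refine ⟨ha, ?_⟩
    subst ha
    simpa [hξy, hξ0y] using h2
  · simp [omega0]
    ring
end

section
/- Let I₁, I₂ ⊆ ℝ be open intervals with base points s₁ ∈ I₁ and s₂ ∈ I₂, and let γ : I₁ → ℂ and ξ : I₂ → ℂ be continuously differentiable curves. Then for every (x,y) ∈ I₁ × I₂, the determinant of the complex 2×2 matrix whose columns are ∂F̌/∂x(x,y) and ∂F̌/∂y(x,y) equals γ'(x)·ξ'(y)·(|γ(x)|² + |ξ(y)|²). In particular, if γ'(x) ≠ 0, ξ'(y) ≠ 0 and (γ(x), ξ(y)) ≠ (0,0), this determinant is nonzero and its argument (the Lagrangian angle of F̌ at (x,y)) equals arg(γ'(x)) + arg(ξ'(y)) modulo 2π. -/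
open Complex Real

theorem hasDerivAt_beta_aux (I : Set ℝ) (hIo : IsOpen I) (hIc : I.OrdConnected)
    (s : ℝ) (hs : s ∈ I) (γ γ' : ℝ → ℂ)
    (hγ : ∀ x ∈ I, HasDerivAt γ (γ' x) x) (hc : ContinuousOn γ' I) (x : ℝ) (hx : x ∈ I) :
    HasDerivAt (fun t => (((1/2 * ‖γ t‖ ^ 2 : ℝ) : ℂ) + Complex.I * ((beta γ γ' s t : ℝ) : ℂ)))
      ((starRingEnd ℂ) (γ x) * γ' x) x := by
  have hg : ContinuousOn γ I := fun t ht => (hγ t ht).continuousAt.continuousWithinAt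
  have hf : ContinuousOn (fun t => ((starRingEnd ℂ) (γ t) * γ' t).im) I :=
    Complex.continuous_im.comp_continuousOn
      ((Complex.continuous_conj.comp_continuousOn hg).mul hc)
  have hb : HasDerivAt (beta γ γ' s) (((starRingEnd ℂ) (γ x) * γ' x).im) x := by
    unfold beta
    apply intervalIntegral.integral_hasDerivAt_right
    · exact (hf.mono (hIc.uIcc_subset hs hx)).intervalIntegrable
    · exact hf.stronglyMeasurableAtFilter hIo x hx
    · exact hf.continuousAt (hIo.mem_nhds hx)
  have hn : HasDerivAt (fun t => 1/2 * ‖γ t‖ ^ 2) (((starRingEnd ℂ) (γ x) * γ' x).re) x := by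
    have h := ((hγ x hx).norm_sq).const_mul (1/2 : ℝ)
    have e : (1/2 : ℝ) * (2 * inner ℝ (γ x) (γ' x)) = ((starRingEnd ℂ) (γ x) * γ' x).re := by
      rw [Complex.inner]
      ring
    rw [← e]
    exact h
  have h := hn.ofReal_comp.add (hb.ofReal_comp.const_mul Complex.I)
  have e : ((((starRingEnd ℂ) (γ x) * γ' x).re : ℝ) : ℂ)
      + Complex.I * ((((starRingEnd ℂ) (γ x) * γ' x).im : ℝ) : ℂ)
      = (starRingEnd ℂ) (γ x) * γ' x := by
    rw [mul_comm Complex.I, Complex.re_add_im]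
  rw [e] at h
  exact h

/-- The determinant of the complex `2×2` matrix whose columns are the
partial derivatives of `F̌` equals `γ'(x)·ξ'(y)·(|γ(x)|² + |ξ(y)|²)`; if `γ'(x) ≠ 0`,
`ξ'(y) ≠ 0` and `(γ(x), ξ(y)) ≠ (0,0)` it is nonzero, and its argument (the Lagrangian
angle) equals `arg(γ'(x)) + arg(ξ'(y))` modulo `2π`. -/
theorem lagrangian_angle_ansatz
    (I₁ I₂ : Set ℝ) (hI₁o : IsOpen I₁) (hI₂o : IsOpen I₂)
    (hI₁c : I₁.OrdConnected) (hI₂c : I₂.OrdConnected)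
    (s₁ s₂ : ℝ) (hs₁ : s₁ ∈ I₁) (hs₂ : s₂ ∈ I₂)
    (γ ξ γ' ξ' : ℝ → ℂ)
    (hγ : ∀ x ∈ I₁, HasDerivAt γ (γ' x) x)
    (hξ : ∀ y ∈ I₂, HasDerivAt ξ (ξ' y) y)
    (hγ'c : ContinuousOn γ' I₁) (hξ'c : ContinuousOn ξ' I₂)
    (x y : ℝ) (hx : x ∈ I₁) (hy : y ∈ I₂)
    (Dx Dy : ℂ × ℂ)
    (hDx : HasDerivAt (fun x' => Fcheck γ ξ γ' ξ' s₁ s₂ x' y) Dx x)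
    (hDy : HasDerivAt (fun y' => Fcheck γ ξ γ' ξ' s₁ s₂ x y') Dy y) :
    Matrix.det !![Dx.1, Dy.1; Dx.2, Dy.2]
        = γ' x * ξ' y * (((‖γ x‖ ^ 2 + ‖ξ y‖ ^ 2 : ℝ)) : ℂ) ∧
    ((γ' x ≠ 0 ∧ ξ' y ≠ 0 ∧ (γ x, ξ y) ≠ ((0 : ℂ), (0 : ℂ))) →
      Matrix.det !![Dx.1, Dy.1; Dx.2, Dy.2] ≠ 0 ∧
      ∃ k : ℤ, Complex.arg (Matrix.det !![Dx.1, Dy.1; Dx.2, Dy.2])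
          = Complex.arg (γ' x) + Complex.arg (ξ' y) + 2 * π * k) := by
  have hG := hasDerivAt_beta_aux I₁ hI₁o hI₁c s₁ hs₁ γ γ' hγ hγ'c x hx
  have hX := hasDerivAt_beta_aux I₂ hI₂o hI₂c s₂ hs₂ ξ ξ' hξ hξ'c y hy
  have hDx1 : Dx = (γ' x * ξ y, -((starRingEnd ℂ) (γ x) * γ' x)) := by
    refine hDx.unique ?_
    refine HasDerivAt.prodMk ((hγ x hx).mul_const (ξ y)) ?_
    refine (hG.const_sub (((1/2 * ‖ξ y‖ ^ 2 : ℝ) : ℂ) + Complex.I * ((beta ξ ξ' s₂ y : ℝ) : ℂ))).congr_of_eventuallyEq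
      (Filter.Eventually.of_forall fun t => ?_)
    push_cast
    ring
  have hDy1 : Dy = (γ x * ξ' y, (starRingEnd ℂ) (ξ y) * ξ' y) := by
    refine hDy.unique ?_
    refine HasDerivAt.prodMk ((hξ y hy).const_mul (γ x)) ?_
    refine (hX.sub_const (((1/2 * ‖γ x‖ ^ 2 : ℝ) : ℂ) + Complex.I * ((beta γ γ' s₁ x : ℝ) : ℂ))).congr_of_eventuallyEq
      (Filter.Eventually.of_forall fun t => ?_)
    push_cast
    ring
  have hdet : Matrix.det !![Dx.1, Dy.1; Dx.2, Dy.2]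
        = γ' x * ξ' y * (((‖γ x‖ ^ 2 + ‖ξ y‖ ^ 2 : ℝ)) : ℂ) := by
    rw [Matrix.det_fin_two_of, hDx1, hDy1]
    push_cast
    rw [← Complex.conj_mul', ← Complex.conj_mul']
    ring
  refine ⟨hdet, ?_⟩
  rintro ⟨h1, h2, h3⟩
  have hpos : 0 < ‖γ x‖ ^ 2 + ‖ξ y‖ ^ 2 := by
    by_cases h : γ x = 0
    · have h' : ξ y ≠ 0 := fun h' => h3 (by rw [h, h'])
      have := norm_pos_iff.mpr h'
      positivity
    · have := norm_pos_iff.mpr h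
      positivity
  rw [hdet]
  refine ⟨mul_ne_zero (mul_ne_zero h1 h2) (Complex.ofReal_ne_zero.mpr hpos.ne'), ?_⟩
  rw [mul_comm, Complex.arg_real_mul _ hpos]
  have ha := Complex.arg_mul_coe_angle h1 h2
  rw [← Real.Angle.coe_add, Real.Angle.angle_eq_iff_two_pi_dvd_sub] at ha
  obtain ⟨k, hk⟩ := ha
  exact ⟨k, by linarith⟩
end

section
/- Let I₁, I₂ ⊆ ℝ be open intervals with base points s₁ ∈ I₁ and s₂ ∈ I₂, and let γ : I₁ → ℂ and ξ : I₂ → ℂ be continuously differentiable curves. Define h : I₁ × I₂ → ℝ by h(x,y) := −(1/2)(|γ(x)|² − |ξ(y)|²)(β_γ(x) − β_ξ(y)) + β̃_γ(x) + β̃_ξ(y). Then for all (x,y) ∈ I₁ × I₂: ∂h/∂x(x,y) = Im(conj(F̌₁(x,y))·∂F̌₁/∂x(x,y) + conj(F̌₂(x,y))·∂F̌₂/∂x(x,y)) and ∂h/∂y(x,y) = Im(conj(F̌₁(x,y))·∂F̌₁/∂y(x,y) + conj(F̌₂(x,y))·∂F̌₂/∂y(x,y)); that is, the pullback by F̌ of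 the Liouville form λ = Σ_j (1/2i)(z̄_j dz_j − z_j dz̄_j) on ℂ² equals dh, so the image of F̌ is an exact Lagrangian surface. -/
open Complex

/-- The primitive `β̃_γ` of `|γ|²` times the pullback of the Liouville form by `γ`. -/
noncomputable def betaTilde (γ γ' : ℝ → ℂ) (s₀ s : ℝ) : ℝ :=
  ∫ t in s₀..s, ‖γ t‖ ^ 2 * ((starRingEnd ℂ) (γ t) * γ' t).im

/-- The primitive `h` of the pullback by `F̌` of the Liouville form on `ℂ²`. -/
noncomputable def hprim (γ ξ γ' ξ' : ℝ → ℂ) (s₁ s₂ : ℝ) (x y : ℝ) : ℝ :=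
  -(1/2) * ((‖γ x‖ ^ 2 - ‖ξ y‖ ^ 2)
      * (beta γ γ' s₁ x - beta ξ ξ' s₂ y))
    + betaTilde γ γ' s₁ x + betaTilde ξ ξ' s₂ y

theorem aux_ftc (f : ℝ → ℝ) (I : Set ℝ) (ho : IsOpen I) (hc : I.OrdConnected)
    (hf : ContinuousOn f I) (s x : ℝ) (hs : s ∈ I) (hx : x ∈ I) :
    HasDerivAt (fun z => ∫ t in s..z, f t) (f x) x := by
  apply intervalIntegral.integral_hasDerivAt_right
  · exact (hf.mono (hc.uIcc_subset hs hx)).intervalIntegrable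
  · exact hf.stronglyMeasurableAtFilter ho x hx
  · exact hf.continuousAt (ho.mem_nhds hx)

theorem aux_curve (I : Set ℝ) (ho : IsOpen I) (hc : I.OrdConnected)
    (γ γ' : ℝ → ℂ) (hγ : ∀ x ∈ I, HasDerivAt γ (γ' x) x) (hc' : ContinuousOn γ' I)
    (s x : ℝ) (hs : s ∈ I) (hx : x ∈ I) :
    HasDerivAt (beta γ γ' s) (((starRingEnd ℂ) (γ x) * γ' x).im) x ∧
    HasDerivAt (betaTilde γ γ' s) (‖γ x‖ ^ 2 * ((starRingEnd ℂ) (γ x) * γ' x).im) x ∧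
    HasDerivAt (fun z => ‖γ z‖ ^ 2) (2 * ((starRingEnd ℂ) (γ x) * γ' x).re) x := by
  have hcont : ContinuousOn γ I := fun z hz => (hγ z hz).continuousAt.continuousWithinAt
  have h1 : ContinuousOn (fun t => ((starRingEnd ℂ) (γ t) * γ' t).im) I :=
    Complex.continuous_im.comp_continuousOn
      ((Complex.continuous_conj.comp_continuousOn hcont).mul hc')
  refine ⟨aux_ftc _ I ho hc h1 s x hs hx,
    aux_ftc _ I ho hc ((hcont.norm.pow 2).mul h1) s x hs hx, ?_⟩
  have h2 := (hγ x hx).norm_sq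
  convert h2 using 2
  simp [Complex.inner, mul_comm]

/-- The pullback by `F̌` of the Liouville form
`λ = Σⱼ (1/2i)(z̄ⱼ dzⱼ − zⱼ dz̄ⱼ)` on `ℂ²` equals `dh`: the partial derivatives of `h`
are `Im(conj(F̌₁)·∂F̌₁ + conj(F̌₂)·∂F̌₂)` in each direction, so the image of `F̌` is an
exact Lagrangian surface. -/
theorem exactness_of_ansatz
    (I₁ I₂ : Set ℝ) (hI₁o : IsOpen I₁) (hI₂o : IsOpen I₂)
    (hI₁c : I₁.OrdConnected) (hI₂c : I₂.OrdConnected)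
    (s₁ s₂ : ℝ) (hs₁ : s₁ ∈ I₁) (hs₂ : s₂ ∈ I₂)
    (γ ξ γ' ξ' : ℝ → ℂ)
    (hγ : ∀ x ∈ I₁, HasDerivAt γ (γ' x) x)
    (hξ : ∀ y ∈ I₂, HasDerivAt ξ (ξ' y) y)
    (hγ'c : ContinuousOn γ' I₁) (hξ'c : ContinuousOn ξ' I₂)
    (x y : ℝ) (hx : x ∈ I₁) (hy : y ∈ I₂)
    (Dx Dy : ℂ × ℂ)
    (hDx : HasDerivAt (fun x' => Fcheck γ ξ γ' ξ' s₁ s₂ x' y) Dx x)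
    (hDy : HasDerivAt (fun y' => Fcheck γ ξ γ' ξ' s₁ s₂ x y') Dy y) :
    HasDerivAt (fun x' => hprim γ ξ γ' ξ' s₁ s₂ x' y)
      (((starRingEnd ℂ) (Fcheck γ ξ γ' ξ' s₁ s₂ x y).1 * Dx.1
        + (starRingEnd ℂ) (Fcheck γ ξ γ' ξ' s₁ s₂ x y).2 * Dx.2).im) x ∧
    HasDerivAt (fun y' => hprim γ ξ γ' ξ' s₁ s₂ x y')
      (((starRingEnd ℂ) (Fcheck γ ξ γ' ξ' s₁ s₂ x y).1 * Dy.1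
        + (starRingEnd ℂ) (Fcheck γ ξ γ' ξ' s₁ s₂ x y).2 * Dy.2).im) y := by
  obtain ⟨g1, g2, g3⟩ := aux_curve I₁ hI₁o hI₁c γ γ' hγ hγ'c s₁ x hs₁ hx
  obtain ⟨k1, k2, k3⟩ := aux_curve I₂ hI₂o hI₂c ξ ξ' hξ hξ'c s₂ y hs₂ hy
  have ex : HasDerivAt (fun x' => Fcheck γ ξ γ' ξ' s₁ s₂ x' y) _ x :=
    ((hγ x hx).mul_const (ξ y)).prodMk
      ((((g3.const_sub (‖ξ y‖ ^ 2)).const_mul (1/2 : ℝ)).ofReal_comp).add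
        (((g1.const_sub (beta ξ ξ' s₂ y)).ofReal_comp).const_mul Complex.I))
  have ey : HasDerivAt (fun y' => Fcheck γ ξ γ' ξ' s₁ s₂ x y') _ y :=
    ((hξ y hy).const_mul (γ x)).prodMk
      ((((k3.sub_const (‖γ x‖ ^ 2)).const_mul (1/2 : ℝ)).ofReal_comp).add
        (((k1.sub_const (beta γ γ' s₁ x)).ofReal_comp).const_mul Complex.I))
  have hgn : ‖γ x‖ ^ 2 = (γ x).re ^ 2 + (γ x).im ^ 2 := by
    rw [Complex.sq_norm, Complex.normSq_apply]; ring
  have hkn : ‖ξ y‖ ^ 2 = (ξ y).re ^ 2 + (ξ y).im ^ 2 := by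
    rw [Complex.sq_norm, Complex.normSq_apply]; ring
  rw [hDx.unique ex, hDy.unique ey]
  constructor
  · have H := ((((g3.sub_const (‖ξ y‖ ^ 2)).mul (g1.sub_const (beta ξ ξ' s₂ y))).const_mul
      (-(1/2) : ℝ)).add g2).add_const (betaTilde ξ ξ' s₂ y)
    refine HasDerivAt.congr_deriv H ?_
    simp only [Fcheck, map_mul, map_add, Complex.conj_ofReal, Complex.conj_I, Complex.add_im,
      Complex.mul_im, Complex.mul_re, Complex.add_re, Complex.ofReal_re, Complex.ofReal_im,
      Complex.I_re, Complex.I_im, Complex.neg_re, Complex.neg_im, Complex.conj_re,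
      Complex.conj_im, hgn, hkn]
    ring
  · have H := ((((k3.const_sub (‖γ x‖ ^ 2)).mul (k1.const_sub (beta γ γ' s₁ x))).const_mul
      (-(1/2) : ℝ)).add_const (betaTilde γ γ' s₁ x)).add k2
    refine HasDerivAt.congr_deriv H ?_
    simp only [Fcheck, map_mul, map_add, Complex.conj_ofReal, Complex.conj_I, Complex.add_im,
      Complex.mul_im, Complex.mul_re, Complex.add_re, Complex.ofReal_re, Complex.ofReal_im,
      Complex.I_re, Complex.I_im, Complex.neg_re, Complex.neg_im, Complex.conj_re,
      Complex.conj_im, hgn, hkn]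
    ring
end

section
/- Let μ₁, μ₂, μ₃ : ℂ³ → ℝ be as defined, and at each point of ℂ³ let M be the complex 3×3 matrix with entries M_{jk} := i·∂μ_j/∂x_k − ∂μ_j/∂y_k (that is, M_{jk} = 2i·∂μ_j/∂z̄_k, where ∂/∂z̄_k = (1/2)(∂/∂x_k + i·∂/∂y_k)). Then det M = exp(conj(z₃))·(|z₁|² + |z₂|² + |z₁|²·|z₂|²). In particular, whenever (z₁, z₂) ≠ (0, 0), the argument of det M equals −Im(z₃) modulo 2π, so the Lagrangian angle θ of the level sets of (μ₁, μ₂, μ₃) satisfies θ + Im(z₃) = const, i.e. the smooth part of each level set is a Lagrangian translating soliton. -/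
open Complex Real

/-- Partial derivative `∂f/∂x_k` of `f : ℝ³ × ℝ³ → ℝ` in the real coordinates
`(x₁, x₂, x₃, y₁, y₂, y₃)` on `ℂ³ ≅ ℝ⁶`. -/
noncomputable def pdx (f : (Fin 3 → ℝ) → (Fin 3 → ℝ) → ℝ) (k : Fin 3)
    (x y : Fin 3 → ℝ) : ℝ :=
  deriv (fun t => f (Function.update x k t) y) (x k)

/-- Partial derivative `∂f/∂y_k`. -/
noncomputable def pdy (f : (Fin 3 → ℝ) → (Fin 3 → ℝ) → ℝ) (k : Fin 3)
    (x y : Fin 3 → ℝ) : ℝ :=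
  deriv (fun t => f x (Function.update y k t)) (y k)

/-- The functions `μ₁, μ₂, μ₃ : ℂ³ → ℝ` (in real coordinates `z_j = x_j + i y_j`). -/
noncomputable def mu : Fin 3 → (Fin 3 → ℝ) → (Fin 3 → ℝ) → ℝ :=
  ![fun x y => x 2 - (x 0 ^ 2 + y 0 ^ 2) / 2,
    fun x y => x 2 - (x 1 ^ 2 + y 1 ^ 2) / 2,
    fun x y => Real.exp (x 2) *
      ((x 0 * y 1 + x 1 * y 0) * Real.cos (y 2) + (x 0 * x 1 - y 0 * y 1) * Real.sin (y 2))]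

/-- The complex matrix `M_{jk} = i·∂μ_j/∂x_k − ∂μ_j/∂y_k = 2i·∂μ_j/∂z̄_k`, whose rows
encode `J∇μ_j`, so that `arg det M` is the Lagrangian angle of the level set. -/
noncomputable def Mmat (x y : Fin 3 → ℝ) : Matrix (Fin 3) (Fin 3) ℂ :=
  Matrix.of fun j k =>
    Complex.I * ((pdx (mu j) k x y : ℝ) : ℂ) - ((pdy (mu j) k x y : ℝ) : ℂ)

theorem deriv_affine_quad (a b c s : ℝ) :
    deriv (fun t : ℝ => a + b * t + c * t ^ 2) s = b + 2 * c * s := by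
  have h : HasDerivAt (fun t : ℝ => a + b * t + c * t ^ 2)
      (b * 1 + c * ((2 : ℕ) * s ^ (2 - 1) * 1)) s :=
    (((hasDerivAt_id s).const_mul b).const_add a).add (((hasDerivAt_id s).pow 2).const_mul c)
  rw [h.deriv]
  norm_num
  ring

theorem deriv_trig_lin (a b c s : ℝ) :
    deriv (fun t : ℝ => a * (b * Real.cos t + c * Real.sin t)) s
      = a * (-b * Real.sin s + c * Real.cos s) := by
  have h := ((((Real.hasDerivAt_cos s).const_mul b).add
    ((Real.hasDerivAt_sin s).const_mul c)).const_mul a)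
  have h2 := h.deriv
  refine Eq.trans h2 ?_
  ring

theorem deriv_exp_lin (b s : ℝ) :
    deriv (fun t : ℝ => Real.exp t * b) s = Real.exp s * b :=
  ((Real.hasDerivAt_exp s).mul_const b).deriv

theorem pdx_00 (x y : Fin 3 → ℝ) : pdx (mu 0) 0 x y = -x 0 := by
  have h : (fun t => mu 0 (Function.update x 0 t) y) = fun t : ℝ => (x 2 - y 0 ^ 2 / 2) + (0) * t + (-1/2) * t ^ 2 := by
    funext t
    simp [mu, Function.update]
    try ring
  unfold pdx
  rw [h, deriv_affine_quad]
  try ring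

theorem pdy_00 (x y : Fin 3 → ℝ) : pdy (mu 0) 0 x y = -y 0 := by
  have h : (fun t => mu 0 x (Function.update y 0 t)) = fun t : ℝ => (x 2 - x 0 ^ 2 / 2) + (0) * t + (-1/2) * t ^ 2 := by
    funext t
    simp [mu, Function.update]
    try ring
  unfold pdy
  rw [h, deriv_affine_quad]
  try ring

theorem pdx_01 (x y : Fin 3 → ℝ) : pdx (mu 0) 1 x y = 0 := by
  have h : (fun t => mu 0 (Function.update x 1 t) y) = fun t : ℝ => (x 2 - (x 0 ^ 2 + y 0 ^ 2) / 2) + (0) * t + (0) * t ^ 2 := by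
    funext t
    simp [mu, Function.update]
    try ring
  unfold pdx
  rw [h, deriv_affine_quad]
  try ring

theorem pdy_01 (x y : Fin 3 → ℝ) : pdy (mu 0) 1 x y = 0 := by
  have h : (fun t => mu 0 x (Function.update y 1 t)) = fun t : ℝ => (x 2 - (x 0 ^ 2 + y 0 ^ 2) / 2) + (0) * t + (0) * t ^ 2 := by
    funext t
    simp [mu, Function.update]
    try ring
  unfold pdy
  rw [h, deriv_affine_quad]
  try ring

theorem pdx_02 (x y : Fin 3 → ℝ) : pdx (mu 0) 2 x y = 1 := by
  have h : (fun t => mu 0 (Function.update x 2 t) y) = fun t : ℝ => (-(x 0 ^ 2 + y 0 ^ 2) / 2) + (1) * t + (0) * t ^ 2 := by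
    funext t
    simp [mu, Function.update]
    try ring
  unfold pdx
  rw [h, deriv_affine_quad]
  try ring

theorem pdy_02 (x y : Fin 3 → ℝ) : pdy (mu 0) 2 x y = 0 := by
  have h : (fun t => mu 0 x (Function.update y 2 t)) = fun t : ℝ => (x 2 - (x 0 ^ 2 + y 0 ^ 2) / 2) + (0) * t + (0) * t ^ 2 := by
    funext t
    simp [mu, Function.update]
    try ring
  unfold pdy
  rw [h, deriv_affine_quad]
  try ring

theorem pdx_10 (x y : Fin 3 → ℝ) : pdx (mu 1) 0 x y = 0 := by
  have h : (fun t => mu 1 (Function.update x 0 t) y) = fun t : ℝ => (x 2 - (x 1 ^ 2 + y 1 ^ 2) / 2) + (0) * t + (0) * t ^ 2 := by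
    funext t
    simp [mu, Function.update]
    try ring
  unfold pdx
  rw [h, deriv_affine_quad]
  try ring

theorem pdy_10 (x y : Fin 3 → ℝ) : pdy (mu 1) 0 x y = 0 := by
  have h : (fun t => mu 1 x (Function.update y 0 t)) = fun t : ℝ => (x 2 - (x 1 ^ 2 + y 1 ^ 2) / 2) + (0) * t + (0) * t ^ 2 := by
    funext t
    simp [mu, Function.update]
    try ring
  unfold pdy
  rw [h, deriv_affine_quad]
  try ring

theorem pdx_11 (x y : Fin 3 → ℝ) : pdx (mu 1) 1 x y = -x 1 := by
  have h : (fun t => mu 1 (Function.update x 1 t) y) = fun t : ℝ => (x 2 - y 1 ^ 2 / 2) + (0) * t + (-1/2) * t ^ 2 := by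
    funext t
    simp [mu, Function.update]
    try ring
  unfold pdx
  rw [h, deriv_affine_quad]
  try ring

theorem pdy_11 (x y : Fin 3 → ℝ) : pdy (mu 1) 1 x y = -y 1 := by
  have h : (fun t => mu 1 x (Function.update y 1 t)) = fun t : ℝ => (x 2 - x 1 ^ 2 / 2) + (0) * t + (-1/2) * t ^ 2 := by
    funext t
    simp [mu, Function.update]
    try ring
  unfold pdy
  rw [h, deriv_affine_quad]
  try ring

theorem pdx_12 (x y : Fin 3 → ℝ) : pdx (mu 1) 2 x y = 1 := by
  have h : (fun t => mu 1 (Function.update x 2 t) y) = fun t : ℝ => (-(x 1 ^ 2 + y 1 ^ 2) / 2) + (1) * t + (0) * t ^ 2 := by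
    funext t
    simp [mu, Function.update]
    try ring
  unfold pdx
  rw [h, deriv_affine_quad]
  try ring

theorem pdy_12 (x y : Fin 3 → ℝ) : pdy (mu 1) 2 x y = 0 := by
  have h : (fun t => mu 1 x (Function.update y 2 t)) = fun t : ℝ => (x 2 - (x 1 ^ 2 + y 1 ^ 2) / 2) + (0) * t + (0) * t ^ 2 := by
    funext t
    simp [mu, Function.update]
    try ring
  unfold pdy
  rw [h, deriv_affine_quad]
  try ring

theorem pdx_20 (x y : Fin 3 → ℝ) : pdx (mu 2) 0 x y = Real.exp (x 2) * (y 1 * Real.cos (y 2) + x 1 * Real.sin (y 2)) := by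
  have h : (fun t => mu 2 (Function.update x 0 t) y) = fun t : ℝ => (Real.exp (x 2) * (x 1 * y 0 * Real.cos (y 2) - y 0 * y 1 * Real.sin (y 2))) + (Real.exp (x 2) * (y 1 * Real.cos (y 2) + x 1 * Real.sin (y 2))) * t + (0) * t ^ 2 := by
    funext t
    simp [mu, Function.update]
    try ring
  unfold pdx
  rw [h, deriv_affine_quad]
  try ring

theorem pdx_21 (x y : Fin 3 → ℝ) : pdx (mu 2) 1 x y = Real.exp (x 2) * (y 0 * Real.cos (y 2) + x 0 * Real.sin (y 2)) := by
  have h : (fun t => mu 2 (Function.update x 1 t) y) = fun t : ℝ => (Real.exp (x 2) * (x 0 * y 1 * Real.cos (y 2) - y 0 * y 1 * Real.sin (y 2))) + (Real.exp (x 2) * (y 0 * Real.cos (y 2) + x 0 * Real.sin (y 2))) * t + (0) * t ^ 2 := by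
    funext t
    simp [mu, Function.update]
    try ring
  unfold pdx
  rw [h, deriv_affine_quad]
  try ring

theorem pdy_20 (x y : Fin 3 → ℝ) : pdy (mu 2) 0 x y = Real.exp (x 2) * (x 1 * Real.cos (y 2) - y 1 * Real.sin (y 2)) := by
  have h : (fun t => mu 2 x (Function.update y 0 t)) = fun t : ℝ => (Real.exp (x 2) * (x 0 * y 1 * Real.cos (y 2) + x 0 * x 1 * Real.sin (y 2))) + (Real.exp (x 2) * (x 1 * Real.cos (y 2) - y 1 * Real.sin (y 2))) * t + (0) * t ^ 2 := by
    funext t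
    simp [mu, Function.update]
    try ring
  unfold pdy
  rw [h, deriv_affine_quad]
  try ring

theorem pdy_21 (x y : Fin 3 → ℝ) : pdy (mu 2) 1 x y = Real.exp (x 2) * (x 0 * Real.cos (y 2) - y 0 * Real.sin (y 2)) := by
  have h : (fun t => mu 2 x (Function.update y 1 t)) = fun t : ℝ => (Real.exp (x 2) * (x 1 * y 0 * Real.cos (y 2) + x 0 * x 1 * Real.sin (y 2))) + (Real.exp (x 2) * (x 0 * Real.cos (y 2) - y 0 * Real.sin (y 2))) * t + (0) * t ^ 2 := by
    funext t
    simp [mu, Function.update]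
    try ring
  unfold pdy
  rw [h, deriv_affine_quad]
  try ring

theorem pdx_22 (x y : Fin 3 → ℝ) : pdx (mu 2) 2 x y = Real.exp (x 2) * ((x 0 * y 1 + x 1 * y 0) * Real.cos (y 2) + (x 0 * x 1 - y 0 * y 1) * Real.sin (y 2)) := by
  have h : (fun t => mu 2 (Function.update x 2 t) y) = fun t : ℝ => Real.exp t * ((x 0 * y 1 + x 1 * y 0) * Real.cos (y 2) + (x 0 * x 1 - y 0 * y 1) * Real.sin (y 2)) := by
    funext t
    simp [mu, Function.update]
    try ring
  unfold pdx
  rw [h, deriv_exp_lin]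
  try ring

theorem pdy_22 (x y : Fin 3 → ℝ) : pdy (mu 2) 2 x y = Real.exp (x 2) * (-(x 0 * y 1 + x 1 * y 0) * Real.sin (y 2) + (x 0 * x 1 - y 0 * y 1) * Real.cos (y 2)) := by
  have h : (fun t => mu 2 x (Function.update y 2 t)) = fun t : ℝ => Real.exp (x 2) * ((x 0 * y 1 + x 1 * y 0) * Real.cos t + (x 0 * x 1 - y 0 * y 1) * Real.sin t) := by
    funext t
    simp [mu, Function.update]
    try ring
  unfold pdy
  rw [h, deriv_trig_lin]
  try ring

theorem norm_sq_coord (a b : ℝ) : ‖(a : ℂ) + (b : ℂ) * Complex.I‖ ^ 2 = a ^ 2 + b ^ 2 := by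
  rw [← Complex.normSq_eq_norm_sq, Complex.normSq_add_mul_I]

theorem exp_conj_coord (a b : ℝ) :
    Complex.exp ((starRingEnd ℂ) ((a : ℂ) + (b : ℂ) * Complex.I))
      = (Real.exp a : ℂ) * ((Real.cos b : ℂ) - (Real.sin b : ℂ) * Complex.I) := by
  have h : (starRingEnd ℂ) ((a : ℂ) + (b : ℂ) * Complex.I)
      = (a : ℂ) + ((-b : ℝ) : ℂ) * Complex.I := by
    simp
  rw [h, Complex.exp_add, Complex.exp_mul_I, ← Complex.ofReal_exp, ← Complex.ofReal_cos,
    ← Complex.ofReal_sin, Real.cos_neg, Real.sin_neg]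
  push_cast
  ring

theorem det_M_formula (x y : Fin 3 → ℝ) : (Mmat x y).det
    = (Real.exp (x 2) : ℂ) * ((Real.cos (y 2) : ℂ) - (Real.sin (y 2) : ℂ) * Complex.I)
      * (((x 0 ^ 2 + y 0 ^ 2) + (x 1 ^ 2 + y 1 ^ 2)
          + (x 0 ^ 2 + y 0 ^ 2) * (x 1 ^ 2 + y 1 ^ 2) : ℝ) : ℂ) := by
  rw [Matrix.det_fin_three]
  simp only [Mmat, Matrix.of_apply, pdx_00, pdx_01, pdx_02, pdx_10, pdx_11, pdx_12, pdx_20, pdx_21, pdx_22, pdy_00, pdy_01, pdy_02, pdy_10, pdy_11, pdy_12, pdy_20, pdy_21, pdy_22]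
  push_cast
  generalize Complex.exp (x 2) = e
  generalize Complex.cos (y 2) = c
  generalize Complex.sin (y 2) = s
  have hI : Complex.I ^ 2 = -1 := Complex.I_sq
  have hI3 : Complex.I ^ 3 = -Complex.I := Complex.I_pow_three
  ring_nf
  simp only [hI, hI3]
  ring

/-- `det M = e^{conj z₃}·(|z₁|² + |z₂|² + |z₁|²|z₂|²)`; in particular
if `(z₁, z₂) ≠ (0,0)` then `arg det M ≡ −Im z₃ (mod 2π)`, so the Lagrangian angle `θ`
of the level sets of `(μ₁, μ₂, μ₃)` satisfies `θ + Im z₃ = const`: the smooth part of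
each level set is a Lagrangian translating soliton. -/
theorem det_M_eq (x y : Fin 3 → ℝ) :
    (letI z : Fin 3 → ℂ := fun j => (x j : ℂ) + (y j : ℂ) * Complex.I
     (Mmat x y).det
        = Complex.exp ((starRingEnd ℂ) (z 2))
          * ((‖z 0‖ ^ 2 + ‖z 1‖ ^ 2
              + ‖z 0‖ ^ 2 * ‖z 1‖ ^ 2 : ℝ) : ℂ)) ∧
    (letI z : Fin 3 → ℂ := fun j => (x j : ℂ) + (y j : ℂ) * Complex.I
     (z 0, z 1) ≠ ((0 : ℂ), (0 : ℂ)) →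
      ∃ k : ℤ, ((Mmat x y).det).arg = -(z 2).im + 2 * π * k) := by
  have key := det_M_formula x y
  rw [← exp_conj_coord, ← norm_sq_coord, ← norm_sq_coord] at key
  refine ⟨key, ?_⟩
  intro hz
  have hpos : 0 < ‖(x 0 : ℂ) + (y 0 : ℂ) * Complex.I‖ ^ 2 + ‖(x 1 : ℂ) + (y 1 : ℂ) * Complex.I‖ ^ 2
      + ‖(x 0 : ℂ) + (y 0 : ℂ) * Complex.I‖ ^ 2 * ‖(x 1 : ℂ) + (y 1 : ℂ) * Complex.I‖ ^ 2 := by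
    by_cases h0 : (x 0 : ℂ) + (y 0 : ℂ) * Complex.I = 0
    · have h1 : (x 1 : ℂ) + (y 1 : ℂ) * Complex.I ≠ 0 := fun h1 => hz (Prod.ext h0 h1)
      have := norm_pos_iff.mpr h1
      positivity
    · have := norm_pos_iff.mpr h0
      positivity
  rw [key, Complex.arg_mul_real hpos, Complex.arg_exp]
  refine ⟨-toIocDiv Real.two_pi_pos (-π) (-(y 2)), ?_⟩
  have him : ((starRingEnd ℂ) ((x 2 : ℂ) + (y 2 : ℂ) * Complex.I)).im = -(y 2) := by simp
  have him' : ((x 2 : ℂ) + (y 2 : ℂ) * Complex.I).im = y 2 := by simp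
  simp only [him, him']
  rw [toIocMod, zsmul_eq_mul]
  push_cast
  ring
end

section
/- Let m ≥ 2 be an integer, μ > 0, let l̃ be the Lawlor neck profile curve on I = (−π/(2(m−1)), π/(2(m−1))), and let β(s) := ∫₀^{s} |l̃(t)|² dt. Define G : I × ℝ → ℂ² by G(x,y) := (μ·y·l̃(x), (1/2)(y² − μ²|l̃(x)|²) − i·μ²·β(x)). Then G is injective, and G(x, −y) = (−G₁(x,y), G₂(x,y)) for all (x,y) ∈ I × ℝ; i.e. the image of G is invariant under the C₂-action (z₁, z₂) ↦ (−z₁, z₂) composed with the reflection y ↦ −y of the domain. (This is the profile surface F̌_{(b)} producing the SO(m−1)-invariant special Lagrangian L_{(b)}.) -/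
open Complex Real

/-- The Lawlor neck profile curve
`l̃(s) = (cos((m−1)s))^{−1/(m−1)}·e^{is}` on `(−π/(2(m−1)), π/(2(m−1)))`. -/
noncomputable def lawlor (m : ℕ) (s : ℝ) : ℂ :=
  ((Real.cos (((m : ℝ) - 1) * s) ^ (-(1 : ℝ) / ((m : ℝ) - 1)) : ℝ) : ℂ)
    * Complex.exp ((s : ℂ) * Complex.I)

/-- `β(s) = ∫₀^s |l̃(t)|² dt`. -/
noncomputable def betaL (m : ℕ) (s : ℝ) : ℝ :=
  ∫ t in (0 : ℝ)..s, ‖lawlor m t‖ ^ 2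

/-- The profile surface `F̌_{(b)}`:
`G(x,y) = (μ·y·l̃(x), (1/2)(y² − μ²|l̃(x)|²) − i·μ²·β(x))`. -/
noncomputable def Gb (m : ℕ) (μ : ℝ) (x y : ℝ) : ℂ × ℂ :=
  (((μ * y : ℝ) : ℂ) * lawlor m x,
    ((1 / 2 * (y ^ 2 - μ ^ 2 * ‖lawlor m x‖ ^ 2) : ℝ) : ℂ)
      - Complex.I * ((μ ^ 2 * betaL m x : ℝ) : ℂ))

theorem lawlor_cos_pos (m : ℕ) (hm : 2 ≤ m) (x : ℝ)
    (hx : x ∈ Set.Ioo (-(π / (2 * ((m : ℝ) - 1)))) (π / (2 * ((m : ℝ) - 1)))) :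
    0 < Real.cos (((m : ℝ) - 1) * x) := by
  have h1 : (0 : ℝ) < (m : ℝ) - 1 := by
    have : (2 : ℝ) ≤ m := by exact_mod_cast hm
    linarith
  have e : ((m : ℝ) - 1) * (π / (2 * ((m : ℝ) - 1))) = π / 2 := by
    field_simp
  have ha := mul_lt_mul_of_pos_left hx.1 h1
  have hb := mul_lt_mul_of_pos_left hx.2 h1
  apply Real.cos_pos_of_mem_Ioo
  constructor
  · linarith
  · linarith

theorem lawlor_ne_zero (m : ℕ) (hm : 2 ≤ m) (x : ℝ)
    (hx : x ∈ Set.Ioo (-(π / (2 * ((m : ℝ) - 1)))) (π / (2 * ((m : ℝ) - 1)))) :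
    lawlor m x ≠ 0 := by
  unfold lawlor
  refine mul_ne_zero ?_ (Complex.exp_ne_zero _)
  exact_mod_cast (Real.rpow_pos_of_pos (lawlor_cos_pos m hm x hx) _).ne'

theorem lawlor_continuousOn (m : ℕ) (hm : 2 ≤ m) :
    ContinuousOn (lawlor m)
      (Set.Ioo (-(π / (2 * ((m : ℝ) - 1)))) (π / (2 * ((m : ℝ) - 1)))) := by
  unfold lawlor
  refine ContinuousOn.mul ?_ (by fun_prop)
  refine Complex.continuous_ofReal.comp_continuousOn ?_
  refine ContinuousOn.rpow_const (by fun_prop) ?_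
  intro x hx
  exact Or.inl (lawlor_cos_pos m hm x hx).ne'

theorem betaL_strictMonoOn (m : ℕ) (hm : 2 ≤ m) :
    StrictMonoOn (betaL m)
      (Set.Ioo (-(π / (2 * ((m : ℝ) - 1)))) (π / (2 * ((m : ℝ) - 1)))) := by
  have h1 : (0 : ℝ) < (m : ℝ) - 1 := by
    have : (2 : ℝ) ≤ m := by exact_mod_cast hm
    linarith
  have hp : 0 < π / (2 * ((m : ℝ) - 1)) := by positivity
  have h0 : (0 : ℝ) ∈ Set.Ioo (-(π / (2 * ((m : ℝ) - 1)))) (π / (2 * ((m : ℝ) - 1))) :=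
    ⟨by linarith, hp⟩
  have hi : ∀ a ∈ Set.Ioo (-(π / (2 * ((m : ℝ) - 1)))) (π / (2 * ((m : ℝ) - 1))),
      ∀ b ∈ Set.Ioo (-(π / (2 * ((m : ℝ) - 1)))) (π / (2 * ((m : ℝ) - 1))),
      IntervalIntegrable (fun t => ‖lawlor m t‖ ^ 2) MeasureTheory.volume a b := by
    intro a ha b hb
    apply ContinuousOn.intervalIntegrable
    exact (((lawlor_continuousOn m hm).norm).pow 2).mono (Set.OrdConnected.uIcc_subset Set.ordConnected_Ioo ha hb)
  intro a ha b hb hab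
  have hs := intervalIntegral.integral_interval_sub_left (hi 0 h0 b hb) (hi 0 h0 a ha)
  have hpos : 0 < ∫ t in a..b, ‖lawlor m t‖ ^ 2 := by
    apply intervalIntegral.intervalIntegral_pos_of_pos_on (hi a ha b hb) _ hab
    intro x hx
    have := lawlor_ne_zero m hm x ⟨ha.1.trans hx.1, hx.2.trans hb.2⟩
    positivity
  unfold betaL
  linarith

/-- The profile surface `F̌_{(b)}` (producing the `SO(m−1)`-invariant
special Lagrangian `L_{(b)}`) is injective on `I × ℝ`, and intertwines `y ↦ −y` with
the `C₂`-action `(z₁, z₂) ↦ (−z₁, z₂)` on `ℂ²`. -/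
theorem Fb_injective_and_C2_invariant
    (m : ℕ) (hm : 2 ≤ m) (μ : ℝ) (hμ : 0 < μ) :
    Set.InjOn (fun p : ℝ × ℝ => Gb m μ p.1 p.2)
      ((Set.Ioo (-(π / (2 * ((m : ℝ) - 1)))) (π / (2 * ((m : ℝ) - 1)))) ×ˢ
        (Set.univ : Set ℝ)) ∧
    (∀ x ∈ Set.Ioo (-(π / (2 * ((m : ℝ) - 1)))) (π / (2 * ((m : ℝ) - 1))), ∀ y : ℝ,
      Gb m μ x (-y) = (-(Gb m μ x y).1, (Gb m μ x y).2)) := by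
  constructor
  · rintro ⟨x, y⟩ ⟨hx, -⟩ ⟨x', y'⟩ ⟨hx', -⟩ h
    simp only [Gb, Prod.mk.injEq] at h hx hx'
    obtain ⟨h1, h2⟩ := h
    have h3 := congrArg Complex.im h2
    simp only [Complex.sub_im, Complex.ofReal_im, Complex.I_mul_im, Complex.ofReal_re] at h3
    have hb : betaL m x = betaL m x' := by
      have : μ ^ 2 * betaL m x = μ ^ 2 * betaL m x' := by linarith
      exact mul_left_cancel₀ (by positivity) this
    have hxx : x = x' := (betaL_strictMonoOn m hm).injOn hx hx' hb
    subst hxx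
    have h4 := mul_right_cancel₀ (lawlor_ne_zero m hm x hx) h1
    have h5 : μ * y = μ * y' := by exact_mod_cast h4
    rw [mul_left_cancel₀ hμ.ne' h5]
  · intro x _ y
    simp [Gb]
end

section
/- Let m ≥ 2 and k ≥ 1 be integers with k ≤ m−1, let μ₁, μ₂ > 0 be reals, let l̃ be the Lawlor neck profile curve on I = (−π/(2(m−1)), π/(2(m−1))), and let β(s) := ∫₀^{s} |l̃(t)|² dt. Suppose (x₁, y₁), (x₂, y₂) ∈ I × I and j ∈ ℤ satisfy the three equations: (1) exp(2πij/k)·μ₁μ₂·l̃(x₁)·l̃(y₁) = μ₁μ₂·l̃(x₂)·l̃(y₂); (2) μ₂²|l̃(y₁)|² − μ₁²|l̃(x₁)|² = μ₂²|l̃(y₂)|² − μ₁²|l̃(x₂)|²; (3) μ₂²β(y₁) − μ₁²β(x₁) = μ₂²β(y₂) − μ₁²β(x₂). Then x₁ = x₂, y₁ = y₂, and exp(2πij/k) = 1. (Consequently the profile surface F̌_{(c)}(x,y) = (μ₁μ₂ l̃(x)l̃(y), (1/2)(μ₂²|l̃(y)|² − μ₁²|l̃(x)|²) + i(μ₂²β(y)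 − μ₁²β(x))) is injective and its orbit under the cyclic group C_k acting by (z₁, z₂) ↦ (e^{2πij/k}z₁, z₂) is embedded, which yields the embeddedness of the G-invariant special Lagrangian L_{(c)} whenever the associated cyclic group C_k has order k ≤ m−1.) -/
open Complex Real

lemma aux_cos_pos {c s : ℝ} (hc : 1 ≤ c) (hs : s ∈ Set.Ioo (-(π / (2 * c))) (π / (2 * c))) :
    0 < Real.cos (c * s) := by
  have h : c * (π / (2 * c)) = π / 2 := by field_simp
  apply Real.cos_pos_of_mem_Ioo
  constructor <;> nlinarith [hs.1, hs.2]

lemma aux_norm (m : ℕ) (s : ℝ) (hp : 0 < Real.cos (((m : ℝ) - 1) * s)) :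
    ‖lawlor m s‖ = Real.cos (((m : ℝ) - 1) * s) ^ (-(1 : ℝ) / ((m : ℝ) - 1)) := by
  unfold lawlor
  rw [norm_mul, Complex.norm_exp_ofReal_mul_I, mul_one, Complex.norm_real, Real.norm_eq_abs,
    abs_of_pos (Real.rpow_pos_of_pos hp _)]

lemma aux_inj (m : ℕ) (hc : 1 ≤ (m : ℝ) - 1) {x y : ℝ}
    (hx : x ∈ Set.Ioo (-(π / (2 * ((m : ℝ) - 1)))) (π / (2 * ((m : ℝ) - 1))))
    (hy : y ∈ Set.Ioo (-(π / (2 * ((m : ℝ) - 1)))) (π / (2 * ((m : ℝ) - 1))))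
    (h : ‖lawlor m x‖ = ‖lawlor m y‖) : x = y ∨ x = -y := by
  have px := aux_cos_pos hc hx
  have py := aux_cos_pos hc hy
  rw [aux_norm m x px, aux_norm m y py] at h
  generalize (m : ℝ) - 1 = c at *
  have hne : -(1 : ℝ) / c ≠ 0 := by
    have : c ≠ 0 := by linarith
    simp [this]
  have h' := (Real.rpow_left_inj px.le py.le hne).1 h
  have e : c * (π / (2 * c)) = π / 2 := by field_simp
  rw [← Real.cos_abs (c * x), ← Real.cos_abs (c * y)] at h'
  have bx : |c * x| ≤ π := by
    rw [abs_le]; constructor <;> nlinarith [hx.1, hx.2, Real.pi_pos]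
  have bndy : |c * y| ≤ π := by
    rw [abs_le]; constructor <;> nlinarith [hy.1, hy.2, Real.pi_pos]
  have h2 := Real.injOn_cos ⟨abs_nonneg _, bx⟩ ⟨abs_nonneg _, bndy⟩ h'
  have c0 : c ≠ 0 := by linarith
  rcases abs_eq_abs.1 h2 with h3 | h3
  · left; exact mul_left_cancel₀ c0 h3
  · right; apply mul_left_cancel₀ c0; linarith

lemma aux_beta (m : ℕ) (hc : 1 ≤ (m : ℝ) - 1) :
    StrictMonoOn (betaL m)
      (Set.Ioo (-(π / (2 * ((m : ℝ) - 1)))) (π / (2 * ((m : ℝ) - 1)))) := by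
  set I := Set.Ioo (-(π / (2 * ((m : ℝ) - 1)))) (π / (2 * ((m : ℝ) - 1))) with hI
  have hcont : ContinuousOn (fun t => ‖lawlor m t‖ ^ 2) I := by
    have : ContinuousOn (fun t : ℝ =>
        (Real.cos (((m : ℝ) - 1) * t) ^ (-(1 : ℝ) / ((m : ℝ) - 1))) ^ 2) I := by
      apply ContinuousOn.pow
      apply ContinuousOn.rpow_const
      · fun_prop
      · intro t ht; left; exact (aux_cos_pos hc ht).ne'
    refine this.congr ?_
    intro t ht
    simp only [aux_norm m t (aux_cos_pos hc ht)]
  have h0 : (0 : ℝ) ∈ I := by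
    have : 0 < π / (2 * ((m : ℝ) - 1)) := by
      have := Real.pi_pos
      positivity
    exact ⟨by linarith, this⟩
  have hint : ∀ a ∈ I, ∀ b ∈ I,
      IntervalIntegrable (fun t => ‖lawlor m t‖ ^ 2) MeasureTheory.volume a b := by
    intro a ha b hb
    apply ContinuousOn.intervalIntegrable
    exact hcont.mono (Set.ordConnected_Ioo.uIcc_subset ha hb)
  intro a ha b hb hab
  have hpos : 0 < ∫ t in a..b, ‖lawlor m t‖ ^ 2 := by
    apply intervalIntegral.intervalIntegral_pos_of_pos_on (hint a ha b hb) _ hab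
    intro t ht
    have htI : t ∈ I := ⟨ha.1.trans ht.1, ht.2.trans hb.2⟩
    have p := aux_cos_pos hc htI
    rw [aux_norm m t p]
    positivity
  have := intervalIntegral.integral_add_adjacent_intervals (hint 0 h0 a ha) (hint a ha b hb)
  unfold betaL
  linarith

/-- Injectivity of the `C_k`-orbit of the profile surface `F̌_{(c)}`
built from two Lawlor neck profiles: if `k ≤ m−1` and the three equations hold for
points of `I × I` and a `k`-th root of unity `e^{2πij/k}`, then the points agree and
the root of unity is `1`. This yields the embeddedness of the `G`-invariant special
Lagrangian `L_{(c)}` whenever the cyclic group `C_k` has order `k ≤ m−1`. -/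
theorem Fc_orbit_injective
    (m k : ℕ) (hm : 2 ≤ m) (hk : 1 ≤ k) (hkm : k ≤ m - 1)
    (μ₁ μ₂ : ℝ) (hμ₁ : 0 < μ₁) (hμ₂ : 0 < μ₂)
    (x₁ y₁ x₂ y₂ : ℝ) (j : ℤ)
    (hx₁ : x₁ ∈ Set.Ioo (-(π / (2 * ((m : ℝ) - 1)))) (π / (2 * ((m : ℝ) - 1))))
    (hy₁ : y₁ ∈ Set.Ioo (-(π / (2 * ((m : ℝ) - 1)))) (π / (2 * ((m : ℝ) - 1))))
    (hx₂ : x₂ ∈ Set.Ioo (-(π / (2 * ((m : ℝ) - 1)))) (π / (2 * ((m : ℝ) - 1))))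
    (hy₂ : y₂ ∈ Set.Ioo (-(π / (2 * ((m : ℝ) - 1)))) (π / (2 * ((m : ℝ) - 1))))
    (h1 : Complex.exp (((2 * π * (j : ℝ) / (k : ℝ) : ℝ) : ℂ) * Complex.I)
        * (((μ₁ * μ₂ : ℝ)) : ℂ) * lawlor m x₁ * lawlor m y₁
        = (((μ₁ * μ₂ : ℝ)) : ℂ) * lawlor m x₂ * lawlor m y₂)
    (h2 : μ₂ ^ 2 * ‖lawlor m y₁‖ ^ 2 - μ₁ ^ 2 * ‖lawlor m x₁‖ ^ 2
        = μ₂ ^ 2 * ‖lawlor m y₂‖ ^ 2 - μ₁ ^ 2 * ‖lawlor m x₂‖ ^ 2)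
    (h3 : μ₂ ^ 2 * betaL m y₁ - μ₁ ^ 2 * betaL m x₁
        = μ₂ ^ 2 * betaL m y₂ - μ₁ ^ 2 * betaL m x₂) :
    x₁ = x₂ ∧ y₁ = y₂ ∧
      Complex.exp (((2 * π * (j : ℝ) / (k : ℝ) : ℝ) : ℂ) * Complex.I) = 1 := by
  have hm' : (2 : ℝ) ≤ m := by exact_mod_cast hm
  have hc : 1 ≤ (m : ℝ) - 1 := by linarith
  have hkc : (k : ℝ) ≤ (m : ℝ) - 1 := by
    have : k + 1 ≤ m := by omega
    have : (k : ℝ) + 1 ≤ m := by exact_mod_cast this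
    linarith
  have hk' : (1 : ℝ) ≤ k := by exact_mod_cast hk
  have npos : ∀ s ∈ Set.Ioo (-(π / (2 * ((m : ℝ) - 1)))) (π / (2 * ((m : ℝ) - 1))),
      0 < ‖lawlor m s‖ := by
    intro s hs
    have p := aux_cos_pos hc hs
    rw [aux_norm m s p]
    positivity
  have hμ : (((μ₁ * μ₂ : ℝ)) : ℂ) ≠ 0 := by
    exact_mod_cast (mul_pos hμ₁ hμ₂).ne'
  have h1' : Complex.exp (((2 * π * (j : ℝ) / (k : ℝ) : ℝ) : ℂ) * Complex.I)
      * (lawlor m x₁ * lawlor m y₁) = lawlor m x₂ * lawlor m y₂ := by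
    apply mul_left_cancel₀ hμ
    linear_combination h1
  have hn : ‖lawlor m x₁‖ * ‖lawlor m y₁‖ = ‖lawlor m x₂‖ * ‖lawlor m y₂‖ := by
    have := congrArg norm h1'
    rwa [norm_mul, Complex.norm_exp_ofReal_mul_I, one_mul, norm_mul, norm_mul] at this
  have px₁ := npos _ hx₁
  have px₂ := npos _ hx₂
  have py₁ := npos _ hy₁
  have py₂ := npos _ hy₂
  have hl0 : lawlor m x₁ * lawlor m y₁ ≠ 0 :=
    mul_ne_zero (norm_pos_iff.1 px₁) (norm_pos_iff.1 py₁)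
  have hxn : ‖lawlor m x₁‖ = ‖lawlor m x₂‖ := by
    have hab : (μ₁ ^ 2 * ‖lawlor m x₁‖ ^ 2) * (μ₂ ^ 2 * ‖lawlor m y₁‖ ^ 2)
        = (μ₁ ^ 2 * ‖lawlor m x₂‖ ^ 2) * (μ₂ ^ 2 * ‖lawlor m y₂‖ ^ 2) := by
      linear_combination μ₁ ^ 2 * μ₂ ^ 2 *
        (‖lawlor m x₁‖ * ‖lawlor m y₁‖ + ‖lawlor m x₂‖ * ‖lawlor m y₂‖) * hn
    have p1 : 0 < μ₁ ^ 2 * ‖lawlor m x₁‖ ^ 2 := by positivity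
    have p2 : 0 < μ₂ ^ 2 * ‖lawlor m y₂‖ ^ 2 := by positivity
    have key : (μ₁ ^ 2 * ‖lawlor m x₁‖ ^ 2 - μ₁ ^ 2 * ‖lawlor m x₂‖ ^ 2) *
        (μ₁ ^ 2 * ‖lawlor m x₁‖ ^ 2 + μ₂ ^ 2 * ‖lawlor m y₂‖ ^ 2) = 0 := by
      linear_combination hab - (μ₁ ^ 2 * ‖lawlor m x₁‖ ^ 2) * h2
    have k2 := (mul_eq_zero.1 key).resolve_right (by positivity)
    have k3 : ‖lawlor m x₁‖ ^ 2 = ‖lawlor m x₂‖ ^ 2 := by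
      apply mul_left_cancel₀ (pow_ne_zero 2 hμ₁.ne')
      linarith
    exact (pow_left_inj₀ px₁.le px₂.le two_ne_zero).1 k3
  have hyn : ‖lawlor m y₁‖ = ‖lawlor m y₂‖ := by
    rw [hxn] at hn
    exact mul_left_cancel₀ px₂.ne' hn
  have hb := aux_beta m hc
  have m1 : 0 < μ₁ ^ 2 := by positivity
  have m2 : 0 < μ₂ ^ 2 := by positivity
  have fin : x₁ = x₂ ∧ y₁ = y₂ → x₁ = x₂ ∧ y₁ = y₂ ∧
      Complex.exp (((2 * π * (j : ℝ) / (k : ℝ) : ℝ) : ℂ) * Complex.I) = 1 := by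
    rintro ⟨rfl, rfl⟩
    refine ⟨rfl, rfl, ?_⟩
    apply mul_right_cancel₀ hl0
    rw [h1', one_mul]
  apply fin
  have hxy : x₁ = x₂ ↔ y₁ = y₂ := by
    constructor
    · rintro rfl
      apply hb.injOn hy₁ hy₂
      apply mul_left_cancel₀ m2.ne'
      linarith
    · rintro rfl
      apply hb.injOn hx₁ hx₂
      apply mul_left_cancel₀ m1.ne'
      linarith
  rcases aux_inj m hc hx₁ hx₂ hxn with hx | hx
  · exact ⟨hx, hxy.1 hx⟩
  rcases aux_inj m hc hy₁ hy₂ hyn with hy | hy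
  · exact ⟨hxy.2 hy, hy⟩
  have hph : x₁ + y₁ = 0 := by
    have hS : Complex.exp (((2 * π * (j : ℝ) / (k : ℝ) : ℝ) : ℂ) * Complex.I)
        * Complex.exp ((x₁ : ℂ) * Complex.I) * Complex.exp ((y₁ : ℂ) * Complex.I)
        = Complex.exp ((x₂ : ℂ) * Complex.I) * Complex.exp ((y₂ : ℂ) * Complex.I) := by
      have f : ∀ s ∈ Set.Ioo (-(π / (2 * ((m : ℝ) - 1)))) (π / (2 * ((m : ℝ) - 1))),
          lawlor m s = (‖lawlor m s‖ : ℂ) * Complex.exp ((s : ℂ) * Complex.I) := by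
        intro s hs
        rw [aux_norm m s (aux_cos_pos hc hs)]
        rfl
      rw [f _ hx₁, f _ hy₁, f _ hx₂, f _ hy₂, hxn, hyn] at h1'
      have n0 : (‖lawlor m x₂‖ : ℂ) * (‖lawlor m y₂‖ : ℂ) ≠ 0 := by
        exact_mod_cast (mul_pos px₂ py₂).ne'
      apply mul_left_cancel₀ n0
      linear_combination h1'
    rw [← Complex.exp_add, ← Complex.exp_add, ← Complex.exp_add,
      Complex.exp_eq_exp_iff_exists_int] at hS
    obtain ⟨n, hS⟩ := hS
    have hR := congrArg Complex.im hS
    have hR' : 2 * π * (j : ℝ) / (k : ℝ) + x₁ + y₁ = x₂ + y₂ + n * (2 * π) := by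
      have e1 : ((2 * π * (j : ℝ) / (k : ℝ) + x₁ + y₁ : ℝ) : ℂ) * Complex.I
          = ((x₂ + y₂ + n * (2 * π) : ℝ) : ℂ) * Complex.I := by
        push_cast
        push_cast at hS
        linear_combination hS
      exact_mod_cast mul_right_cancel₀ Complex.I_ne_zero e1
    have k0 : (k : ℝ) ≠ 0 := by linarith
    have hq : (k : ℝ) * (x₁ + y₁) = π * ((n * k - j : ℤ) : ℝ) := by
      push_cast
      field_simp at hR'
      have a1 : x₂ = -x₁ := by linarith
      have a2 : y₂ = -y₁ := by linarith
      rw [a1, a2] at hR'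
      linarith
    have e : ((m : ℝ) - 1) * (π / (2 * ((m : ℝ) - 1))) = π / 2 := by
      have : (m : ℝ) - 1 ≠ 0 := by linarith
      field_simp
    have hlt : |(k : ℝ) * (x₁ + y₁)| < π := by
      rw [abs_mul, abs_of_pos (by linarith : (0 : ℝ) < k)]
      have : |x₁ + y₁| < 2 * (π / (2 * ((m : ℝ) - 1))) := by
        rw [abs_lt]
        constructor <;> linarith [hx₁.1, hx₁.2, hy₁.1, hy₁.2]
      nlinarith [abs_nonneg (x₁ + y₁)]
    rw [hq, abs_mul, abs_of_pos Real.pi_pos] at hlt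
    have hz : |((n * k - j : ℤ) : ℝ)| < 1 := by
      by_contra! hh
      nlinarith [Real.pi_pos]
    have hz' : |(n * k - j : ℤ)| < 1 := by exact_mod_cast hz
    rw [Int.abs_lt_one_iff.1 hz'] at hq
    have : (k : ℝ) * (x₁ + y₁) = 0 := by rw [hq]; simp
    exact (mul_eq_zero.1 this).resolve_left k0
  have hx0 : x₁ = x₂ := by
    rcases lt_trichotomy x₁ x₂ with h | h | h
    · have b1 := hb hx₁ hx₂ h
      have b2 := hb hy₂ hy₁ (by linarith)
      have c1 := mul_lt_mul_of_pos_left b1 m1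
      have c2 := mul_lt_mul_of_pos_left b2 m2
      linarith
    · exact h
    · have b1 := hb hx₂ hx₁ h
      have b2 := hb hy₁ hy₂ (by linarith)
      have c1 := mul_lt_mul_of_pos_left b1 m1
      have c2 := mul_lt_mul_of_pos_left b2 m2
      linarith
  exact ⟨hx0, hxy.1 hx0⟩
end
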